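/- Let X be a metric space, f : X → ℝ a continuous function, λ, c ∈ ℝ and ν > 0. Define ℓ : X → ℝ by ℓ(x) := sup({0} ∪ {d(x,y) : y ∈ X, d(x,y) < ν, f(y) − f(x) − (λ/2)·d(x,y)² > c·d(x,y)}). Then ℓ is lower semicontinuous on X. -/

import Mathlib

/-! Each competitor `y` for `x` satisfies strict inequalities that are continuous in `x`, so the same
`y` is a competitor for all nearby points, with nearly the same distance. Hence every value below
the supremum at `x` stays below the supremum near `x`. The sets involved are bounded above by `ν`
and contain `0`, so the real supremum is a genuine one. -/

open Set

/-- lower semicontinuity of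
`ℓ(x) = sup ({0} ∪ {d(x,y) : d(x,y) < ν and f(y) - f(x) - (λ/2)d(x,y)² > c·d(x,y)})`. -/
theorem stmt_6 {X : Type*} [MetricSpace X] (f : X → ℝ) (hf : Continuous f)
    (lam c ν : ℝ) (hν : 0 < ν) :
    LowerSemicontinuous (fun x : X =>
      sSup ({0} ∪ (fun y => dist x y) ''
        {y : X | dist x y < ν ∧
          c * dist x y < f y - f x - (lam / 2) * dist x y ^ 2})) := by
  intro x a ha
  have hbdd : ∀ z : X, BddAbove ({0} ∪ (fun y => dist z y) ''
      {y : X | dist z y < ν ∧ c * dist z y < f y - f z - (lam / 2) * dist z y ^ 2}) := by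
    intro z
    refine ⟨ν, ?_⟩
    rintro _ (rfl | ⟨y, hy, rfl⟩)
    · exact hν.le
    · exact hy.1.le
  obtain ⟨b, hb, hab⟩ := exists_lt_of_lt_csSup ⟨(0 : ℝ), by simp⟩ ha
  rcases hb with rfl | ⟨y, ⟨hy₁, hy₂⟩, rfl⟩
  · exact Filter.Eventually.of_forall fun z =>
      lt_of_lt_of_le hab (le_csSup (hbdd z) (Or.inl rfl))
  · have hd : Continuous fun z : X => dist z y := by fun_prop
    have h₁ : ∀ᶠ z in nhds x, dist z y < ν :=
      hd.continuousAt.eventually_lt continuousAt_const hy₁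
    have h₂ : ∀ᶠ z in nhds x,
        c * dist z y < f y - f z - (lam / 2) * dist z y ^ 2 :=
      ContinuousAt.eventually_lt (Continuous.continuousAt (by fun_prop))
        (Continuous.continuousAt (by fun_prop)) hy₂
    have h₃ : ∀ᶠ z in nhds x, a < dist z y :=
      continuousAt_const.eventually_lt hd.continuousAt hab
    filter_upwards [h₁, h₂, h₃] with z hz₁ hz₂ hz₃
    exact lt_of_lt_of_le hz₃ (le_csSup (hbdd z) (Or.inr ⟨y, ⟨hz₁, hz₂⟩, rfl⟩))
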